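/- A matrix A ∈ M₆(ℝ) satisfies Aᵀ η A = η, det A = 1, A ε₅ = ε₅ and A(ε₁+ε₄) = ε₁+ε₄ if and only if there exist R ∈ SO(3) and v ∈ ℝ³ such that A = A(R̂; v̂), where R̂ = blockdiag(1, R) ∈ M₄(ℝ) and v̂ = (0, v¹, v², v³) ∈ ℝ⁴. In other words, the image of the embedding of the Euclidean group SO(3) ⋉ ℝ³ into the Laguerre group L coincides with the subgroup of L consisting of all elements fixing the vector ε₁+ε₄. -/

import Mathlib

open Matrix

/-- The Lorentz scalar product on `ℝ⁴`: `(V,W) = −V⁰W⁰ + V¹W¹ + V²W² + V³W³`. -/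
def mprod (V W : Fin 4 → ℝ) : ℝ :=
  -(V 0 * W 0) + V 1 * W 1 + V 2 * W 2 + V 3 * W 3

/-- The Gram matrix `η` of the signature-(4,2) scalar product
`⟨𝔞,𝔟⟩ = −(𝔞⁰𝔟⁵ + 𝔞⁵𝔟⁰) − (𝔞¹𝔟⁴ + 𝔞⁴𝔟¹) + 𝔞²𝔟² + 𝔞³𝔟³` on `ℝ⁶`. -/
def etaM : Matrix (Fin 6) (Fin 6) ℝ :=
  !![0, 0, 0, 0, 0, -1;
     0, 0, 0, 0, -1, 0;
     0, 0, 1, 0, 0, 0;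
     0, 0, 0, 1, 0, 0;
     0, -1, 0, 0, 0, 0;
     -1, 0, 0, 0, 0, 0]

/-- The Gram matrix `ηₗ = diag(−1,1,1,1)` of the Lorentz product on `ℝ⁴`. -/
def etaL : Matrix (Fin 4) (Fin 4) ℝ :=
  !![-1, 0, 0, 0;
     0, 1, 0, 0;
     0, 0, 1, 0;
     0, 0, 0, 1]

/-- The matrix `K`. -/
noncomputable def Kmat : Matrix (Fin 4) (Fin 4) ℝ :=
  !![1 / Real.sqrt 2, 1 / Real.sqrt 2, 0, 0;
     0, 0, 1, 0;
     0, 0, 0, 1;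
     1 / Real.sqrt 2, -(1 / Real.sqrt 2), 0, 0]

/-- The matrix `K⁻¹`. -/
noncomputable def KmatInv : Matrix (Fin 4) (Fin 4) ℝ :=
  !![1 / Real.sqrt 2, 0, 0, 1 / Real.sqrt 2;
     1 / Real.sqrt 2, 0, 0, -(1 / Real.sqrt 2);
     0, 1, 0, 0;
     0, 0, 1, 0]

/-- The row vector `*Ṽ = (−Ṽ³, Ṽ¹, Ṽ², −Ṽ⁰)`, acting on `W` by
`*Ṽ(W) = −(Ṽ⁰W³ + Ṽ³W⁰) + Ṽ¹W¹ + Ṽ²W²`. -/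
def starV (Vt : Fin 4 → ℝ) : Fin 4 → ℝ := ![-(Vt 3), Vt 1, Vt 2, -(Vt 0)]

/-- The element `A(B;V) ∈ M₆(ℝ)` of the Laguerre group: the block matrix with block
rows `(1, 0, 0)`, `(Ṽ, B̃, 0)`, `((V,V)/2, *Ṽ·B̃, 1)`, where `Ṽ = KV`, `B̃ = KBK⁻¹`. -/
noncomputable def AofBV (B : Matrix (Fin 4) (Fin 4) ℝ) (V : Fin 4 → ℝ) :
    Matrix (Fin 6) (Fin 6) ℝ := fun i j =>
  let Vt : Fin 4 → ℝ := Kmat.mulVec V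
  let Bt : Matrix (Fin 4) (Fin 4) ℝ := Kmat * B * KmatInv
  if hi0 : i.val = 0 then (if j.val = 0 then 1 else 0)
  else if hi : i.val ≤ 4 then
    if hj0 : j.val = 0 then Vt ⟨i.val - 1, by omega⟩
    else if hj : j.val ≤ 4 then Bt ⟨i.val - 1, by omega⟩ ⟨j.val - 1, by omega⟩
    else 0
  else
    if hj0 : j.val = 0 then mprod V V / 2
    else if hj : j.val ≤ 4 then Matrix.vecMul (starV Vt) Bt ⟨j.val - 1, by omega⟩
    else 1

/-- The basis vector `ε₅` of `ℝ⁶`. -/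
def eps5 : Fin 6 → ℝ := ![0, 0, 0, 0, 0, 1]

/-- The vector `ε₁ + ε₄` of `ℝ⁶`. -/
def eps14 : Fin 6 → ℝ := ![0, 1, 0, 0, 1, 0]

/-- `R̂ = blockdiag(1, R) ∈ M₄(ℝ)` for `R ∈ M₃(ℝ)`. -/
def hatM (R : Matrix (Fin 3) (Fin 3) ℝ) : Matrix (Fin 4) (Fin 4) ℝ := fun i j =>
  if hi : i.val = 0 then (if j.val = 0 then 1 else 0)
  else if hj : j.val = 0 then 0
  else R ⟨i.val - 1, by have := i.isLt; omega⟩ ⟨j.val - 1, by have := j.isLt; omega⟩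

/-- `v̂ = (0, v¹, v², v³) ∈ ℝ⁴` for `v ∈ ℝ³`. -/
def hatV (v : Fin 3 → ℝ) : Fin 4 → ℝ := ![0, v 0, v 1, v 2]

/-- The change of basis `blockdiag(1, K, 1)` of `ℝ⁶` from an orthonormal to a null basis. -/
noncomputable def nullBasis : Matrix (Fin 6) (Fin 6) ℝ :=
  !![1, 0, 0, 0, 0, 0;
     0, 1 / Real.sqrt 2, 1 / Real.sqrt 2, 0, 0, 0;
     0, 0, 0, 1, 0, 0;
     0, 0, 0, 0, 1, 0;
     0, 1 / Real.sqrt 2, -(1 / Real.sqrt 2), 0, 0, 0;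
     0, 0, 0, 0, 0, 1]

/-- The Gram matrix of `⟨·,·⟩` in the basis given by the columns of `nullBasis`. -/
def lorentzGram : Matrix (Fin 6) (Fin 6) ℝ :=
  !![0, 0, 0, 0, 0, -1;
     0, -1, 0, 0, 0, 0;
     0, 0, 1, 0, 0, 0;
     0, 0, 0, 1, 0, 0;
     0, 0, 0, 0, 1, 0;
     -1, 0, 0, 0, 0, 0]

/-- The matrix of the Euclidean motion `x ↦ R x + v` in the basis `nullBasis`. -/
noncomputable def euclideanMatrix (R : Matrix (Fin 3) (Fin 3) ℝ) (v : Fin 3 → ℝ) :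
    Matrix (Fin 6) (Fin 6) ℝ :=
  !![1, 0, 0, 0, 0, 0;
     0, 1, 0, 0, 0, 0;
     v 0, 0, R 0 0, R 0 1, R 0 2, 0;
     v 1, 0, R 1 0, R 1 1, R 1 2, 0;
     v 2, 0, R 2 0, R 2 1, R 2 2, 0;
     (v ⬝ᵥ v) / 2, 0, (v ᵥ* R) 0, (v ᵥ* R) 1, (v ᵥ* R) 2, 1]

lemma inv_sqrt_two_mul_self : (Real.sqrt 2)⁻¹ * (Real.sqrt 2)⁻¹ = 1 / 2 := by
  rw [← mul_inv, Real.mul_self_sqrt (by norm_num), one_div]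

lemma nullBasis_transpose_mul_self : nullBasisᵀ * nullBasis = 1 := by
  ext i j
  fin_cases i <;> fin_cases j <;>
    simp [nullBasis, Matrix.mul_apply, Fin.sum_univ_six, inv_sqrt_two_mul_self] <;> norm_num

lemma nullBasis_mul_transpose : nullBasis * nullBasisᵀ = 1 :=
  mul_eq_one_comm.mp nullBasis_transpose_mul_self

lemma nullBasis_mul_lorentzGram :
    nullBasis * lorentzGram * nullBasisᵀ = etaM := by
  ext i j
  fin_cases i <;> fin_cases j <;>
    simp [nullBasis, lorentzGram, etaM, Matrix.mul_apply, Fin.sum_univ_six,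
      inv_sqrt_two_mul_self] <;> norm_num

lemma nullBasis_mulVec_single_five : nullBasis *ᵥ Pi.single 5 1 = eps5 := by
  ext i
  fin_cases i <;> simp [nullBasis, eps5]

lemma nullBasis_mulVec_single_one :
    nullBasis *ᵥ Pi.single 1 1 = (Real.sqrt 2)⁻¹ • eps14 := by
  ext i
  fin_cases i <;> simp [nullBasis, eps14]

set_option maxHeartbeats 2000000 in
lemma AofBV_hat (R : Matrix (Fin 3) (Fin 3) ℝ) (v : Fin 3 → ℝ) :
    AofBV (hatM R) (hatV v) = nullBasis * euclideanMatrix R v * nullBasisᵀ := by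
  have h := inv_sqrt_two_mul_self
  ext i j
  fin_cases i <;> fin_cases j <;>
    simp [AofBV, hatM, hatV, Kmat, KmatInv, starV, mprod, nullBasis, euclideanMatrix,
      Matrix.mul_apply, Matrix.mulVec, Matrix.vecMul, dotProduct, Fin.sum_univ_succ] <;>
    grind

lemma det_euclideanMatrix (R : Matrix (Fin 3) (Fin 3) ℝ) (v : Fin 3 → ℝ) :
    (euclideanMatrix R v).det = R.det := by
  rw [Matrix.det_fin_three]
  simp [euclideanMatrix, Matrix.det_succ_row_zero, Fin.sum_univ_succ, Fin.succAbove]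
  ring

/-- The stabilizer of two basis vectors in the special orthogonal group of `lorentzGram`. -/
lemma lorentzGram_stabilizer (M : Matrix (Fin 6) (Fin 6) ℝ) :
    (Mᵀ * lorentzGram * M = lorentzGram ∧ M.det = 1 ∧
      M *ᵥ Pi.single 5 1 = Pi.single 5 1 ∧ M *ᵥ Pi.single 1 1 = Pi.single 1 1) ↔
    ∃ (R : Matrix (Fin 3) (Fin 3) ℝ) (v : Fin 3 → ℝ),
      Rᵀ * R = 1 ∧ R.det = 1 ∧ M = euclideanMatrix R v := by
  constructor
  · rintro ⟨hM, hdet, h5, h1⟩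
    have c5 (i : Fin 6) : M i 5 = (Pi.single 5 1 : Fin 6 → ℝ) i := by
      simpa using congrFun h5 i
    have c1 (i : Fin 6) : M i 1 = (Pi.single 1 1 : Fin 6 → ℝ) i := by
      simpa using congrFun h1 i
    have gram (i j : Fin 6) : -(M 0 i * M 5 j) - M 1 i * M 1 j + M 2 i * M 2 j
        + M 3 i * M 3 j + M 4 i * M 4 j - M 5 i * M 0 j = lorentzGram i j := by
      rw [← hM]
      simp [lorentzGram, Matrix.mul_apply, Fin.sum_univ_six]
      ring
    have r0 (j : Fin 6) : M 0 j = -lorentzGram 5 j := by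
      simp [← gram, c5]
    have r1 (j : Fin 6) : M 1 j = -lorentzGram 1 j := by
      simp [← gram, c1]
    let R : Matrix (Fin 3) (Fin 3) ℝ :=
      !![M 2 2, M 2 3, M 2 4; M 3 2, M 3 3, M 3 4; M 4 2, M 4 3, M 4 4]
    let v : Fin 3 → ℝ := ![M 2 0, M 3 0, M 4 0]
    have r5 (j : Fin 6) : M 5 j = -lorentzGram 0 j - M 5 0 * M 0 j - M 1 0 * M 1 j
        + M 2 0 * M 2 j + M 3 0 * M 3 j + M 4 0 * M 4 j := by
      rw [← gram, r0 0]
      simp [lorentzGram]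
      ring
    have hE : M = euclideanMatrix R v := by
      ext i j
      fin_cases i
      · fin_cases j <;> simp [r0, euclideanMatrix, lorentzGram]
      · fin_cases j <;> simp [r1, euclideanMatrix, lorentzGram]
      · fin_cases j <;> simp [c1, c5, euclideanMatrix, R, v]
      · fin_cases j <;> simp [c1, c5, euclideanMatrix, R, v]
      · fin_cases j <;> simp [c1, c5, euclideanMatrix, R, v]
      · have h50 := r5 0
        fin_cases j
        · simp [r0, r1, lorentzGram] at h50
          simp [euclideanMatrix, v, dotProduct, Fin.sum_univ_three]
          linarith
        · simp [c1, euclideanMatrix]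
        · simp [r5 2, r0, r1, euclideanMatrix, lorentzGram, R, v, vecMul, dotProduct,
            Fin.sum_univ_three]
        · simp [r5 3, r0, r1, euclideanMatrix, lorentzGram, R, v, vecMul, dotProduct,
            Fin.sum_univ_three]
        · simp [r5 4, r0, r1, euclideanMatrix, lorentzGram, R, v, vecMul, dotProduct,
            Fin.sum_univ_three]
        · simp [c5, euclideanMatrix]
    refine ⟨R, v, ?_, ?_, hE⟩
    · ext i j
      have g := gram (Fin.natAdd 2 i.castSucc) (Fin.natAdd 2 j.castSucc)
      fin_cases i <;> fin_cases j <;>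
        simpa [r0, r1, lorentzGram, R, Matrix.mul_apply, Fin.sum_univ_three] using g
    · rw [← det_euclideanMatrix R v, ← hE, hdet]
  · rintro ⟨R, v, hR, hdet, rfl⟩
    refine ⟨?_, by rw [det_euclideanMatrix, hdet], ?_, ?_⟩
    · have g (i j : Fin 3) : R 0 i * R 0 j + R 1 i * R 1 j + R 2 i * R 2 j
          = (1 : Matrix (Fin 3) (Fin 3) ℝ) i j := by
        simp [← hR, Matrix.mul_apply, Fin.sum_univ_three]
      ext i j
      fin_cases i <;> fin_cases j <;>
        simp [euclideanMatrix, lorentzGram, Matrix.mul_apply, Fin.sum_univ_six, vecMul,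
          dotProduct, Fin.sum_univ_three, g] <;> ring
    · ext i
      fin_cases i <;> simp [euclideanMatrix]
    · ext i
      fin_cases i <;> simp [euclideanMatrix]

/-- `A ∈ M₆(ℝ)` satisfies `Aᵀ η A = η`, `det A = 1`, `A ε₅ = ε₅` and
`A(ε₁+ε₄) = ε₁+ε₄` iff `A = A(R̂; v̂)` for some `R ∈ SO(3)` and `v ∈ ℝ³`: the image
of the embedding of the Euclidean group `SO(3) ⋉ ℝ³` into the Laguerre group `L`
is exactly the subgroup of `L` of elements fixing `ε₁+ε₄`. -/
theorem stmt15 (A : Matrix (Fin 6) (Fin 6) ℝ) :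
    (Aᵀ * etaM * A = etaM ∧ A.det = 1 ∧ A.mulVec eps5 = eps5 ∧
      A.mulVec eps14 = eps14) ↔
    (∃ (R : Matrix (Fin 3) (Fin 3) ℝ) (v : Fin 3 → ℝ),
      Rᵀ * R = 1 ∧ R.det = 1 ∧ A = AofBV (hatM R) (hatV v)) := by
  obtain ⟨M, rfl⟩ : ∃ M, A = nullBasis * M * nullBasisᵀ :=
    ⟨nullBasisᵀ * A * nullBasis, by
      simp only [Matrix.mul_assoc, nullBasis_mul_transpose, Matrix.mul_one]
      rw [← Matrix.mul_assoc, nullBasis_mul_transpose, Matrix.one_mul]⟩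
  have cancel (X : Matrix (Fin 6) (Fin 6) ℝ) : nullBasisᵀ * (nullBasis * X) = X := by
    rw [← Matrix.mul_assoc, nullBasis_transpose_mul_self, Matrix.one_mul]
  have conj_inj (X Y : Matrix (Fin 6) (Fin 6) ℝ) :
      nullBasis * X * nullBasisᵀ = nullBasis * Y * nullBasisᵀ ↔ X = Y := by
    refine ⟨fun h => ?_, fun h => by rw [h]⟩
    have h' := congrArg (fun Z => nullBasisᵀ * Z * nullBasis) h
    simpa only [Matrix.mul_assoc, cancel, nullBasis_transpose_mul_self, Matrix.mul_one] using h'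
  have conj_fix (w : Fin 6 → ℝ) :
      (nullBasis * M * nullBasisᵀ) *ᵥ (nullBasis *ᵥ w) = nullBasis *ᵥ w ↔ M *ᵥ w = w := by
    have hw : (nullBasis * M * nullBasisᵀ) *ᵥ (nullBasis *ᵥ w) = nullBasis *ᵥ (M *ᵥ w) := by
      simp only [Matrix.mulVec_mulVec, Matrix.mul_assoc, nullBasis_transpose_mul_self,
        Matrix.mul_one]
    rw [hw]
    refine ⟨fun h => ?_, fun h => by rw [h]⟩
    simpa only [Matrix.mulVec_mulVec, cancel, nullBasis_transpose_mul_self,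
      Matrix.one_mulVec] using congrArg (nullBasisᵀ *ᵥ ·) h
  have gram_iff : (nullBasis * M * nullBasisᵀ)ᵀ * etaM * (nullBasis * M * nullBasisᵀ) = etaM ↔
      Mᵀ * lorentzGram * M = lorentzGram := by
    rw [← conj_inj (Mᵀ * lorentzGram * M), nullBasis_mul_lorentzGram]
    simp only [← nullBasis_mul_lorentzGram, Matrix.transpose_mul, Matrix.transpose_transpose,
      Matrix.mul_assoc, cancel]
  have det_conj : (nullBasis * M * nullBasisᵀ).det = M.det := by
    rw [Matrix.det_mul_right_comm, nullBasis_mul_transpose, Matrix.one_mul]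
  have fix_eps14 : (nullBasis * M * nullBasisᵀ) *ᵥ eps14 = eps14 ↔
      M *ᵥ Pi.single 1 1 = Pi.single 1 1 := by
    rw [← conj_fix, nullBasis_mulVec_single_one, Matrix.mulVec_smul]
    exact (smul_right_injective _ (by positivity : (Real.sqrt 2)⁻¹ ≠ 0)).eq_iff.symm
  simp only [AofBV_hat, conj_inj, gram_iff, det_conj, fix_eps14, ← lorentzGram_stabilizer]
  rw [← nullBasis_mulVec_single_five, conj_fix]
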